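/- Let T be a decision tree, let w be an inner node of T with children u and u', and let m = 1 plus the number of inner nodes of the subtree rooted at u'. Then the tree obtained from T by the single subtree raising operation at w keeping u (which prunes m inner nodes) can also be obtained from T by a sequence of m subtree raising operations, each applied to an inner node at least one of whose two children is a leaf and each pruning exactly one inner node. -/

import Mathlib

/-- The two class labels. -/
inductive Label where
  | blue
  | red
deriving DecidableEq

/-- A decision tree over examples `ι → ℝ` with classes `{blue, red}`:
every inner node carries a feature and a threshold, every leaf a class label.
An example goes to the left child if its value in the node's feature is at most
the threshold, and to the right child otherwise. -/
inductive DTree (ι : Type) where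
  | leaf (c : Label)
  | node (feat : ι) (thr : ℝ) (left right : DTree ι)

namespace DTree

variable {ι : Type}

/-- The class that a decision tree assigns to an example. -/
noncomputable def classify : DTree ι → (ι → ℝ) → Label
  | .leaf c, _ => c
  | .node f t l r, e => if e f ≤ t then l.classify e else r.classify e

/-- The routing path of an example (`false` = left child, `true` = right child);
it is the position of the leaf of the example. -/
noncomputable def route : DTree ι → (ι → ℝ) → List Bool
  | .leaf _, _ => []
  | .node f t l r, e => if e f ≤ t then false :: l.route e else true :: r.route e

/-- The subtree rooted at a position (`none` if the position is not a node). -/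
def subtreeAt : DTree ι → List Bool → Option (DTree ι)
  | T, [] => some T
  | .leaf _, _ :: _ => none
  | .node _ _ l r, b :: p => (if b then r else l).subtreeAt p

/-- Replace the subtree at a given position by another tree. -/
def replaceAt : DTree ι → List Bool → DTree ι → DTree ι
  | _, [], T' => T'
  | .leaf c, _ :: _, _ => .leaf c
  | .node f t l r, b :: p, T' =>
      if b then .node f t l (r.replaceAt p T') else .node f t (l.replaceAt p T') r

/-- The number of inner nodes of a decision tree. -/
def innerCount : DTree ι → ℕ
  | .leaf _ => 0
  | .node _ _ l r => 1 + l.innerCount + r.innerCount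

/-- The position `p` is an inner node of `T`. -/
def IsInnerPos (T : DTree ι) (p : List Bool) : Prop :=
  ∃ f t l r, T.subtreeAt p = some (.node f t l r)

/-- The position `p` is a node of `T`. -/
def IsNodePos (T : DTree ι) (p : List Bool) : Prop :=
  (T.subtreeAt p).isSome

/-- The feature and threshold of the inner node at position `p`. -/
def cutAt (T : DTree ι) (p : List Bool) : Option (ι × ℝ) :=
  match T.subtreeAt p with
  | some (.node f t _ _) => some (f, t)
  | _ => none

/-- The subtree raising operation at position `q` keeping the child in direction `b`:
the subtree rooted at `q` is replaced by the subtree rooted at its `b`-child; it prunes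
the node at `q` together with all inner nodes of the subtree rooted at the other child. -/
def raiseAt (T : DTree ι) (q : List Bool) (b : Bool) : DTree ι :=
  match T.subtreeAt q with
  | some (.node _ _ l r) => T.replaceAt q (if b then r else l)
  | _ => T

end DTree

/-- `E[T,p]`: the examples of `E` whose routing through `T` passes the position `p`. -/
noncomputable def reach {ι : Type} (E : Finset (ι → ℝ)) (T : DTree ι) (p : List Bool) :
    Finset (ι → ℝ) :=
  E.filter fun e => p <+: T.route e

/-- The number of errors of `T` on the training set `(E, lab)`. -/
noncomputable def errCount {ι : Type} (T : DTree ι) (E : Finset (ι → ℝ))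
    (lab : (ι → ℝ) → Label) : ℕ :=
  (E.filter fun e => T.classify e ≠ lab e).card

/-- A most frequent label of the labeled set `(E, lab)` (blue in case of a tie). -/
def majorityLabel {ι : Type} (E : Finset (ι → ℝ)) (lab : (ι → ℝ) → Label) : Label :=
  if (E.filter fun e => lab e = Label.red).card ≤ (E.filter fun e => lab e = Label.blue).card
  then Label.blue else Label.red

/-- One subtree replacement operation: some inner node of `T` is replaced by a leaf
labeled with a most frequent label of the examples reaching it. -/
def ReplStep {ι : Type} (E : Finset (ι → ℝ)) (lab : (ι → ℝ) → Label)
    (T T' : DTree ι) : Prop :=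
  ∃ p, T.IsInnerPos p ∧
    T' = T.replaceAt p (.leaf (majorityLabel (reach E T p) lab))

/-- `T` is a reasonable decision tree for `(E, lab)`: every node is reached by some
example and every leaf carries a most frequent label of the examples reaching it. -/
def Reasonable {ι : Type} (E : Finset (ι → ℝ)) (lab : (ι → ℝ) → Label)
    (T : DTree ι) : Prop :=
  (∀ p, T.IsNodePos p → (reach E T p).Nonempty) ∧
  (∀ p c, T.subtreeAt p = some (.leaf c) → ∀ c' : Label,
    ((reach E T p).filter fun e => lab e = c').card ≤
      ((reach E T p).filter fun e => lab e = c).card)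

/-- Apply a sequence of raising operations (given by positions and kept directions). -/
def applySeq {ι : Type} : DTree ι → List (List Bool × Bool) → DTree ι
  | T, [] => T
  | T, (q, b) :: rest => applySeq (T.raiseAt q b) rest

/-- Each raising operation of the sequence is applied at an inner node. -/
def ValidSeq {ι : Type} : DTree ι → List (List Bool × Bool) → Prop
  | _, [] => True
  | T, (q, b) :: rest => T.IsInnerPos q ∧ ValidSeq (T.raiseAt q b) rest

/-- The total number of inner nodes pruned by a sequence of raising operations. -/
def seqPruned {ι : Type} : DTree ι → List (List Bool × Bool) → ℕ
  | _, [] => 0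
  | T, (q, b) :: rest =>
      (match T.subtreeAt q with
        | some (.node _ _ l r) => 1 + DTree.innerCount (if b then l else r)
        | _ => 0) + seqPruned (T.raiseAt q b) rest

/-- `T'` is obtained from `T` by a (possibly empty) sequence of subtree raising
operations. -/
def RaisedFrom {ι : Type} (T T' : DTree ι) : Prop :=
  ∃ steps, ValidSeq T steps ∧ applySeq T steps = T'

/-- `T'` is obtained from `T` by a sequence of subtree raising operations pruning
exactly `m` inner nodes in total. -/
def RaisedFromPruning {ι : Type} (T : DTree ι) (m : ℕ) (T' : DTree ι) : Prop :=
  ∃ steps, ValidSeq T steps ∧ seqPruned T steps = m ∧ applySeq T steps = T'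

/-- Tracking the position of a node through one raising operation: nodes strictly
below the raised node on the discarded side, and the raised node itself, are pruned
(`none`); all other nodes survive at a possibly shifted position. -/
def stepMap (q : List Bool) (b : Bool) (p : List Bool) : Option (List Bool) :=
  if q <+: p then
    if q ++ [b] <+: p then some (q ++ p.drop (q.length + 1)) else none
  else some p

/-- Tracking the position of a node through a sequence of raising operations. -/
def seqMap : List (List Bool × Bool) → List Bool → Option (List Bool)
  | [], p => some p
  | (q, b) :: rest, p => (stepMap q b p).bind (seqMap rest)

/-- The number of errors of `T` on a multiset of labeled examples. -/
noncomputable def errCountM {ι : Type} (T : DTree ι) (E : Multiset ((ι → ℝ) × Label)) : ℕ :=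
  (E.filter fun q => T.classify q.1 ≠ q.2).card

/-- A sequence of subtree raising operations, each applied to an inner node whose
discarded child is a leaf — so each operation is applied at an inner node at least
one of whose two children is a leaf and prunes exactly one inner node; the count is
the number of operations performed. -/
inductive RaiseLeafSeq {d : ℕ} : DTree (Fin d) → ℕ → DTree (Fin d) → Prop
  | refl (T : DTree (Fin d)) : RaiseLeafSeq T 0 T
  | step {T T'' : DTree (Fin d)} {m : ℕ} (p : List Bool) (b : Bool) (f : Fin d)
      (t : ℝ) (l r : DTree (Fin d)) (c : Label) :
      T.subtreeAt p = some (.node f t l r) →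
      (if b then l else r) = .leaf c →
      RaiseLeafSeq (T.replaceAt p (if b then r else l)) m T'' →
      RaiseLeafSeq T (m + 1) T''

namespace DTree

variable {ι : Type}

theorem subtreeAt_append {T S : DTree ι} {p : List Bool} (h : T.subtreeAt p = some S)
    (q : List Bool) : T.subtreeAt (p ++ q) = S.subtreeAt q := by
  induction p generalizing T with
  | nil => simp_all [subtreeAt]
  | cons a p ih =>
    cases T with
    | leaf c => simp [subtreeAt] at h
    | node f t l r => exact ih h

theorem replaceAt_append {T S : DTree ι} {p : List Bool} (h : T.subtreeAt p = some S)
    (q : List Bool) (X : DTree ι) :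
    T.replaceAt (p ++ q) X = T.replaceAt p (S.replaceAt q X) := by
  induction p generalizing T with
  | nil => simp_all [subtreeAt, replaceAt]
  | cons a p ih =>
    cases T with
    | leaf c => rfl
    | node f t l r => cases a <;> simp_all [subtreeAt, replaceAt]

theorem subtreeAt_replaceAt {T S : DTree ι} {p : List Bool} (h : T.subtreeAt p = some S)
    (X : DTree ι) : (T.replaceAt p X).subtreeAt p = some X := by
  induction p generalizing T with
  | nil => simp [subtreeAt, replaceAt]
  | cons a p ih =>
    cases T with
    | leaf c => simp [subtreeAt] at h
    | node f t l r => cases a <;> simp_all [subtreeAt, replaceAt]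

theorem replaceAt_replaceAt (T : DTree ι) (p : List Bool) (X Y : DTree ι) :
    (T.replaceAt p X).replaceAt p Y = T.replaceAt p Y := by
  induction p generalizing T with
  | nil => simp [replaceAt]
  | cons a p ih =>
    cases T with
    | leaf c => rfl
    | node f t l r => cases a <;> simp_all [replaceAt]

end DTree

theorem RaiseLeafSeq.trans {d : ℕ} {T T' T'' : DTree (Fin d)} {m n : ℕ}
    (h : RaiseLeafSeq T m T') (h' : RaiseLeafSeq T' n T'') : RaiseLeafSeq T (m + n) T'' := by
  induction h with
  | refl T => simpa using h'
  | @step _ _ m p b f t l r c hp hc _ ih =>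
    rw [Nat.add_right_comm]
    exact .step p b f t l r c hp hc (ih h')

/-- Raising at `w` with discarded subtree `D`, by induction on `D`: first raise the right
child of `D` inside `D`, then raise at `w`, which now discards only that child. -/
theorem RaiseLeafSeq.of_discarded {d : ℕ} (D : DTree (Fin d)) :
    ∀ (T : DTree (Fin d)) (w : List Bool) (b : Bool) (f : Fin d) (t : ℝ) (l r : DTree (Fin d)),
      T.subtreeAt w = some (.node f t l r) → (if b then l else r) = D →
      RaiseLeafSeq T (1 + D.innerCount) (T.replaceAt w (if b then r else l)) := by
  induction D with
  | leaf c =>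
    intro T w b f t l r hw hD
    exact .step w b f t l r c hw hD (.refl _)
  | node f' t' l' r' ihl ihr =>
    intro T w b f t l r hw hD
    have hsub : T.subtreeAt (w ++ [!b]) = some (.node f' t' l' r') := by
      rw [DTree.subtreeAt_append hw]
      cases b <;> simp_all [DTree.subtreeAt]
    have inner := ihl T (w ++ [!b]) true f' t' l' r' hsub rfl
    rw [DTree.replaceAt_append hw] at inner
    have outer := ihr _ w b f t (if b then r' else l) (if b then r else r')
      (DTree.subtreeAt_replaceAt hw _) (by cases b <;> rfl)
    rw [DTree.replaceAt_replaceAt] at outer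
    have hcount : 1 + (DTree.node f' t' l' r').innerCount
        = (1 + l'.innerCount) + (1 + r'.innerCount) := by
      simp only [DTree.innerCount]; omega
    rw [hcount]
    refine inner.trans ?_
    cases b <;> simpa [DTree.replaceAt] using outer

/-- Let `w` be an inner node of `T` with children `l` and `r`,
let `b` select the kept child `u` (`r` if `b`, else `l`), and let
`m = 1 +` (number of inner nodes of the discarded child's subtree). Then the tree
obtained from `T` by the single subtree raising operation at `w` keeping `u`
(which prunes `m` inner nodes) can also be obtained from `T` by a sequence of `m`
subtree raising operations, each applied to an inner node at least one of whose
two children is a leaf and each pruning exactly one inner node. -/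
theorem stmt17 {d : ℕ} (T : DTree (Fin d)) (w : List Bool) (b : Bool) (f : Fin d)
    (t : ℝ) (l r : DTree (Fin d))
    (hw : T.subtreeAt w = some (.node f t l r)) :
    RaiseLeafSeq T (1 + DTree.innerCount (if b then l else r))
      (T.replaceAt w (if b then r else l)) := by
  exact RaiseLeafSeq.of_discarded _ T w b f t l r hw rfl
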